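/- Let m ≥ n, let C1 ⊆ F_{q^m}^n be an MRD code, and let C2 ⊊ C1 be a subcode. Then for every 0 ≤ μ ≤ n − dim C2, the μ-th RDIP is K_{R,μ}(C1,C2) = max(0, μ − n + dim C1). -/

import Mathlib

open scoped BigOperators

noncomputable section

variable (q : ℕ) (Fq : Type*) {Fqm : Type*} [Field Fq] [Field Fqm] [Algebra Fq Fqm]

/-- `V = V^q`: the image of `V` under the coordinatewise `q`-th power map equals `V`
(membership in the family `Γ(F_{q^m}^n)`). -/
def IsGalClosed {n : ℕ} (V : Submodule Fqm (Fin n → Fqm)) : Prop :=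
  (fun v : Fin n → Fqm => fun i => v i ^ q) '' (V : Set (Fin n → Fqm)) =
    (V : Set (Fin n → Fqm))

/-- The `i`-th relative dimension/intersection profile (RDIP) of `C1` and `C2`. -/
noncomputable def RDIP {n : ℕ} (C1 C2 : Submodule Fqm (Fin n → Fqm)) (i : ℕ) : ℕ :=
  sSup {d : ℕ | ∃ V : Submodule Fqm (Fin n → Fqm), IsGalClosed q V ∧
    Module.finrank Fqm ↥V = i ∧
    d = Module.finrank Fqm ↥(C1 ⊓ V) - Module.finrank Fqm ↥(C2 ⊓ V)}

/-- The `i`-th relative generalized rank weight (RGRW) of `C1` and `C2`. -/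
noncomputable def RGRW {n : ℕ} (C1 C2 : Submodule Fqm (Fin n → Fqm)) (i : ℕ) : ℕ :=
  sInf {d : ℕ | ∃ V : Submodule Fqm (Fin n → Fqm), IsGalClosed q V ∧
    d = Module.finrank Fqm ↥V ∧
    i ≤ Module.finrank Fqm ↥(C1 ⊓ V) - Module.finrank Fqm ↥(C2 ⊓ V)}

/-- The rank weight `d_R(x,0)` of a vector: the `F_q`-dimension of the `F_q`-span of
its coordinates. -/
noncomputable def rankWeight {ι : Type*} (x : ι → Fqm) : ℕ :=
  Module.finrank Fq ↥(Submodule.span Fq (Set.range x))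

/-- The minimum rank distance of a (nonzero) linear code. -/
noncomputable def minRankDist {ι : Type*} (C : Submodule Fqm (ι → Fqm)) : ℕ :=
  sInf {d : ℕ | ∃ x, x ∈ C ∧ x ≠ 0 ∧ d = rankWeight Fq x}

/-- The dual code with respect to the standard bilinear form `⟨x,y⟩ = ∑ i, x i * y i`. -/
def dualCode {n : ℕ} (V : Submodule Fqm (Fin n → Fqm)) : Submodule Fqm (Fin n → Fqm) where
  carrier := {x | ∀ v ∈ V, ∑ i, x i * v i = 0}
  add_mem' := by
    intro a b ha hb v hv
    have h1 := ha v hv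
    have h2 := hb v hv
    simp only [Set.mem_setOf_eq] at *
    simp only [Pi.add_apply, add_mul]
    rw [Finset.sum_add_distrib, h1, h2, add_zero]
  zero_mem' := by
    intro v hv
    simp
  smul_mem' := by
    intro c x hx v hv
    have h := hx v hv
    simp only [Set.mem_setOf_eq] at *
    simp only [Pi.smul_apply, smul_eq_mul, mul_assoc]
    rw [← Finset.mul_sum, h, mul_zero]

/-!
A Galois closed subspace `V` of dimension `μ` has a basis of vectors over `F_q`. Any `d` of these
basis vectors span a subspace all of whose vectors have rank weight at most `d`, so for
`d = n - dim C1`, less than the minimum rank distance, that subspace meets `C1` trivially and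
`dim (C1 ∩ V) ≤ μ - d` (or `C1 ∩ V = 0` when `μ < d`).

For the reverse inequality, `C2` has a complement spanned by `n - dim C2` standard basis vectors.
The span `V` of any `μ` of them is Galois closed and meets `C2` trivially, while
`dim (C1 ∩ V) ≥ dim C1 + μ - n` by counting dimensions.
-/

open Module Submodule

section ComplementsAndProjections

variable {K M ι : Type*} [DivisionRing K] [AddCommGroup M] [Module K M]

theorem exists_isCompl_span_image (p : Submodule K M) {v : ι → M}
    (hv : span K (Set.range v) = ⊤) : ∃ s : Set ι, IsCompl p (span K (v '' s)) := by
  obtain ⟨s, -, -, hspan, hli⟩ :=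
    exists_linearIndepOn_extension (linearIndepOn_empty K (p.mkQ ∘ v)) (Set.empty_subset Set.univ)
  refine ⟨s, Disjoint.symm ?_, ?_⟩
  · have hdisj : Disjoint (span K (Set.range fun i : s => v i)) (LinearMap.ker p.mkQ) :=
      range_ker_disjoint hli
    rwa [p.ker_mkQ, ← Set.image_eq_range] at hdisj
  · rw [codisjoint_iff, ← map_mkQ_eq_top, map_span, ← Set.image_comp, eq_top_iff]
    calc ⊤ = span K (p.mkQ ∘ v '' Set.univ) := by
            rw [Set.image_univ, Set.range_comp, ← map_span, hv, Submodule.map_top, p.range_mkQ]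
      _ ≤ span K (p.mkQ ∘ v '' s) := span_le.2 hspan

theorem exists_isCompl_spanSubset [Finite ι] (C : Submodule K (ι → K)) :
    ∃ s : Set ι, IsCompl C (Pi.spanSubset K s) :=
  exists_isCompl_span_image C (Pi.basisFun K ι).span_eq

theorem exists_disjoint_spanSubset [Finite ι] (C : Submodule K (ι → K)) {i : ℕ}
    (hi : i ≤ Nat.card ι - finrank K C) :
    ∃ s : Set ι, s.ncard = i ∧ Disjoint C (Pi.spanSubset K s) := by
  have := Fintype.ofFinite ι
  obtain ⟨t, ht⟩ := exists_isCompl_spanSubset C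
  have hdim := finrank_add_eq_of_isCompl ht
  rw [Pi.dim_spanSubset, finrank_fintype_fun_eq_card, ← Nat.card_eq_fintype_card] at hdim
  obtain ⟨s, hst, hs⟩ := Set.exists_subset_card_eq (show i ≤ t.ncard by lia)
  exact ⟨s, hs, ht.disjoint.mono_right (span_mono (Set.image_mono hst))⟩

theorem finrank_add_le_finrank_inf_add [FiniteDimensional K M] (U V : Submodule K M) :
    finrank K U + finrank K V ≤ finrank K ↥(U ⊓ V) + finrank K M := by
  have := finrank_sup_add_finrank_inf_eq U V
  have := finrank_le (U ⊔ V)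
  lia

theorem projection_map_of_mapsTo {R N : Type*} [Ring R] [AddCommGroup N] [Module R N]
    {V W : Submodule R N} (h : IsCompl V W) (φ : N →+ N) (hV : ∀ v ∈ V, φ v ∈ V)
    (hW : ∀ w ∈ W, φ w ∈ W) (x : N) :
    V.projection W h (φ x) = φ (V.projection W h x) := by
  have hx : x - V.projection W h x ∈ W := by
    rw [← projection_apply_eq_zero_iff h, map_sub,
      projection_apply_of_mem_left h (projection_apply_mem h x), sub_self]
  calc V.projection W h (φ x)
      = V.projection W h (φ (V.projection W h x) + φ (x - V.projection W h x)) := by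
        rw [← map_add, add_sub_cancel]
    _ = φ (V.projection W h x) := by
        rw [map_add, projection_apply_of_mem_left h (hV _ (projection_apply_mem h x)),
          projection_apply_of_mem_right h (hW _ hx), add_zero]

end ComplementsAndProjections

section RationalVectors

variable {ι : Type*}

variable (Fqm ι) in
/-- The `F_q`-rational vectors of `F_{q^m}^ι`: the copy of `F_q^ι` inside it, an `F_q`-subspace
that will turn out to be the fixed space of Frobenius. -/
def rationalVectors : Submodule Fq (ι → Fqm) :=
  LinearMap.range ((Algebra.linearMap Fq Fqm).compLeft ι)

variable {Fq}

theorem mem_rationalVectors {v : ι → Fqm} :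
    v ∈ rationalVectors Fq Fqm ι ↔ ∀ i, v i ∈ Set.range (algebraMap Fq Fqm) := by
  refine ⟨?_, fun h => ?_⟩
  · rintro ⟨u, rfl⟩ i
    exact ⟨u i, rfl⟩
  · choose u hu using h
    exact ⟨u, funext hu⟩

theorem rankWeight_le_card_of_mem_span {κ : Type*} [Fintype κ] {w : κ → ι → Fqm}
    (hw : ∀ k, w k ∈ rationalVectors Fq Fqm ι) {x : ι → Fqm}
    (hx : x ∈ span Fqm (Set.range w)) : rankWeight Fq x ≤ Fintype.card κ := by
  choose u hu using hw
  obtain ⟨c, rfl⟩ := mem_span_range_iff_exists_fun Fqm |>.1 hx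
  have hcoord (i : ι) : (∑ k, c k • w k) i = ∑ k, u k i • c k := by
    simp [← hu, Algebra.smul_def, mul_comm]
  have hspan : span Fq (Set.range (∑ k, c k • w k)) ≤ span Fq (Set.range c) := by
    rw [span_le]
    rintro _ ⟨i, rfl⟩
    rw [hcoord]
    exact sum_mem fun k _ => smul_mem _ _ (subset_span ⟨k, rfl⟩)
  have : FiniteDimensional Fq (span Fq (Set.range c)) := .span_of_finite Fq (Set.finite_range c)
  exact (finrank_mono hspan).trans (finrank_range_le_card c)

theorem minRankDist_le_rankWeight {C : Submodule Fqm (ι → Fqm)} {x : ι → Fqm} (hx : x ∈ C)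
    (hx0 : x ≠ 0) : minRankDist Fq C ≤ rankWeight Fq x :=
  Nat.sInf_le ⟨x, hx, hx0, rfl⟩

variable (Fq) in
/-- The subspace `V` is defined over `F_q`: it is spanned by its `F_q`-rational vectors. This is
the form in which Galois closedness bounds rank weights. -/
def IsDefinedOver (V : Submodule Fqm (ι → Fqm)) : Prop :=
  span Fqm (V ∩ rationalVectors Fq Fqm ι : Set (ι → Fqm)) = V

namespace IsDefinedOver

variable [Finite ι] {V : Submodule Fqm (ι → Fqm)}

theorem exists_linearIndependent_rational (hV : IsDefinedOver Fq V) {d : ℕ}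
    (hd : d ≤ finrank Fqm V) :
    ∃ w : Fin d → ι → Fqm, (∀ k, w k ∈ V) ∧ (∀ k, w k ∈ rationalVectors Fq Fqm ι) ∧
      LinearIndependent Fqm w := by
  obtain ⟨w, hw, -, hli⟩ :=
    exists_fun_fin_finrank_span_eq Fqm (V ∩ rationalVectors Fq Fqm ι : Set (ι → Fqm))
  rw [← show span Fqm (V ∩ rationalVectors Fq Fqm ι : Set (ι → Fqm)) = V from hV] at hd
  exact ⟨w ∘ Fin.castLE hd, fun k => (hw _).1, fun k => (hw _).2,
    hli.comp _ (Fin.castLE_injective hd)⟩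

theorem finrank_inf_le (hV : IsDefinedOver Fq V) {C : Submodule Fqm (ι → Fqm)} {d : ℕ}
    (hd : d < minRankDist Fq C) : finrank Fqm ↥(C ⊓ V) ≤ finrank Fqm V - d := by
  obtain ⟨w, hwV, hwrat, hli⟩ :=
    hV.exists_linearIndependent_rational (min_le_right d (finrank Fqm V))
  set W := span Fqm (Set.range w)
  have hWV : W ≤ V := span_le.2 (Set.range_subset_iff.2 hwV)
  have hW : finrank Fqm W = min d (finrank Fqm V) := by
    rw [finrank_span_eq_card hli, Fintype.card_fin]
  have hCW : C ⊓ W = ⊥ := by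
    refine (Submodule.eq_bot_iff _).2 fun x hx => by_contra fun hx0 => ?_
    have hle := rankWeight_le_card_of_mem_span hwrat hx.2
    have hge := minRankDist_le_rankWeight (Fq := Fq) hx.1 hx0
    rw [Fintype.card_fin] at hle
    lia
  have hdim := finrank_sup_add_finrank_inf_eq (C ⊓ V) W
  rw [inf_assoc, inf_eq_right.2 hWV, hCW, finrank_bot, hW] at hdim
  have hsup : finrank Fqm ↥(C ⊓ V ⊔ W) ≤ finrank Fqm V := finrank_mono (sup_le inf_le_right hWV)
  lia

end IsDefinedOver

end RationalVectors

section Frobenius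

variable {Fq} [Fintype Fq]

theorem pow_card_eq_self_iff_mem_range_algebraMap {y : Fqm} :
    y ^ Fintype.card Fq = y ↔ y ∈ Set.range (algebraMap Fq Fqm) := by
  refine ⟨fun hy => ?_, ?_⟩
  · set f : Polynomial Fq := Polynomial.X ^ Fintype.card Fq - Polynomial.X with hf
    have hdeg := FiniteField.X_pow_card_sub_X_natDegree_eq Fq (Fintype.one_lt_card (α := Fq))
    have hsplits : f.Splits := by
      rw [Polynomial.splits_iff_card_roots, FiniteField.roots_X_pow_card_sub_X, hdeg]
      rfl
    refine hsplits.mem_range_of_isRoot (FiniteField.X_pow_card_sub_X_ne_zero Fq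
      Fintype.one_lt_card) ?_
    simp [hf, hy]
  · rintro ⟨c, rfl⟩
    rw [← map_pow, FiniteField.pow_card]

theorem pow_card_surjective [PerfectField Fqm] :
    Function.Surjective fun y : Fqm => y ^ Fintype.card Fq := by
  obtain ⟨p, _, k, hp, hcard⟩ := FiniteField.card' Fq
  have : ExpChar Fqm p :=
    have := ExpChar.prime (R := Fq) hp
    expChar_of_injective_algebraMap (algebraMap Fq Fqm).injective p
  rw [hcard]
  exact (bijective_iterateFrobenius Fqm p k).2

variable {ι : Type*}

variable (Fq Fqm ι) in
/-- The coordinatewise Frobenius `v ↦ v^q` on `F_{q^m}^ι` with `q = |F_q|`, bundled as an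
`F_q`-algebra map so that its additivity is available. -/
def coordFrobenius : (ι → Fqm) →ₐ[Fq] (ι → Fqm) :=
  (FiniteField.frobeniusAlgHom Fq Fqm).compLeft ι

theorem coordFrobenius_apply (v : ι → Fqm) (i : ι) :
    coordFrobenius Fq Fqm ι v i = v i ^ Fintype.card Fq := rfl

theorem coordFrobenius_eq_self_iff {v : ι → Fqm} :
    coordFrobenius Fq Fqm ι v = v ↔ v ∈ rationalVectors Fq Fqm ι := by
  simp only [funext_iff, coordFrobenius_apply, pow_card_eq_self_iff_mem_range_algebraMap,
    mem_rationalVectors]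

theorem coordFrobenius_mem_spanSubset [Finite ι] {s : Set ι} {v : ι → Fqm} :
    coordFrobenius Fq Fqm ι v ∈ Pi.spanSubset Fqm s ↔ v ∈ Pi.spanSubset Fqm s := by
  simp only [Pi.mem_spanSubset_iff, coordFrobenius_apply, pow_eq_zero_iff Fintype.card_ne_zero]

/-- `V` has a complement spanned by standard basis vectors. It is Frobenius-stable too, so the
projection onto `V` along it commutes with Frobenius and maps rational vectors to rational ones. -/
theorem isDefinedOver_of_coordFrobenius_mem [Finite ι] {V : Submodule Fqm (ι → Fqm)}
    (hV : ∀ v ∈ V, coordFrobenius Fq Fqm ι v ∈ V) : IsDefinedOver Fq V := by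
  obtain ⟨s, hs⟩ := exists_isCompl_spanSubset V
  set P := V.projection (Pi.spanSubset Fqm s) hs
  have hrat (i : ι) : P (Pi.basisFun Fqm ι i) ∈ rationalVectors Fq Fqm ι := by
    classical
    have hbasis : Pi.basisFun Fqm ι i ∈ rationalVectors Fq Fqm ι :=
      mem_rationalVectors.2 fun j => ⟨(Pi.single i 1 : ι → Fq) j, by
        simp [Pi.single_apply, apply_ite (algebraMap Fq Fqm)]⟩
    rw [← coordFrobenius_eq_self_iff] at hbasis ⊢
    conv_rhs => rw [← hbasis]
    exact (projection_map_of_mapsTo hs (coordFrobenius Fq Fqm ι : (ι → Fqm) →+ (ι → Fqm)) hV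
      (fun _ => coordFrobenius_mem_spanSubset.2) _).symm
  refine le_antisymm (span_le.2 Set.inter_subset_left) ?_
  calc V = LinearMap.range P := (range_projection hs).symm
    _ = span Fqm (Set.range (P ∘ Pi.basisFun Fqm ι)) := by
        rw [Set.range_comp, ← map_span, (Pi.basisFun Fqm ι).span_eq, Submodule.map_top]
    _ ≤ span Fqm (V ∩ rationalVectors Fq Fqm ι : Set (ι → Fqm)) :=
        span_mono (Set.range_subset_iff.2 fun i => ⟨projection_apply_mem hs _, hrat i⟩)

theorem IsGalClosed.isDefinedOver {n : ℕ} {V : Submodule Fqm (Fin n → Fqm)}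
    (hV : IsGalClosed (Fintype.card Fq) V) : IsDefinedOver Fq V :=
  isDefinedOver_of_coordFrobenius_mem fun _ hv =>
    hV.subset (Set.mem_image_of_mem _ hv)

theorem isGalClosed_spanSubset [PerfectField Fqm] {n : ℕ} (s : Set (Fin n)) :
    IsGalClosed (Fintype.card Fq) (Pi.spanSubset Fqm s) := by
  have hsurj : Function.Surjective (coordFrobenius Fq Fqm (Fin n)) :=
    (pow_card_surjective (Fq := Fq) (Fqm := Fqm)).comp_left
  have hpre : (Pi.spanSubset Fqm s : Set (Fin n → Fqm)) =
      coordFrobenius Fq Fqm (Fin n) ⁻¹' Pi.spanSubset Fqm s :=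
    Set.ext fun _ => coordFrobenius_mem_spanSubset.symm
  unfold IsGalClosed
  nth_rewrite 1 [hpre]
  exact Set.image_preimage_eq _ hsurj

end Frobenius

section RDIP

variable {q Fq} {n : ℕ} {C₁ C₂ : Submodule Fqm (Fin n → Fqm)}

theorem RDIP_le {i d : ℕ} (h : ∀ V : Submodule Fqm (Fin n → Fqm), IsGalClosed q V →
    finrank Fqm V = i → finrank Fqm ↥(C₁ ⊓ V) - finrank Fqm ↥(C₂ ⊓ V) ≤ d) :
    RDIP q C₁ C₂ i ≤ d :=
  csSup_le' fun _ ⟨V, hV, hVi, hd⟩ => hd ▸ h V hV hVi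

theorem le_RDIP {V : Submodule Fqm (Fin n → Fqm)} (hV : IsGalClosed q V) :
    finrank Fqm ↥(C₁ ⊓ V) - finrank Fqm ↥(C₂ ⊓ V) ≤ RDIP q C₁ C₂ (finrank Fqm V) :=
  le_csSup ⟨finrank Fqm C₁, fun _ ⟨_, _, _, hd⟩ =>
    hd.le.trans ((Nat.sub_le _ _).trans (finrank_mono inf_le_left))⟩ ⟨V, hV, rfl, rfl⟩

variable [Fintype Fq]

theorem RDIP_le_sub {d : ℕ} (hd : d < minRankDist Fq C₁) (i : ℕ) :
    RDIP (Fintype.card Fq) C₁ C₂ i ≤ i - d :=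
  RDIP_le fun _ hV hVi => (Nat.sub_le _ _).trans (hVi ▸ hV.isDefinedOver.finrank_inf_le hd)

theorem add_finrank_le_RDIP_add [PerfectField Fqm] {i : ℕ} (hi : i ≤ n - finrank Fqm C₂) :
    i + finrank Fqm C₁ ≤ RDIP (Fintype.card Fq) C₁ C₂ i + n := by
  obtain ⟨s, rfl, hdisj⟩ := exists_disjoint_spanSubset C₂ (hi.trans_eq (by rw [Nat.card_fin]))
  have hRDIP := le_RDIP (C₁ := C₁) (C₂ := C₂) (isGalClosed_spanSubset (Fq := Fq) (Fqm := Fqm) s)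
  have hdim := finrank_add_le_finrank_inf_add C₁ (Pi.spanSubset Fqm s)
  rw [hdisj.eq_bot, finrank_bot, Nat.sub_zero, Pi.dim_spanSubset] at hRDIP
  rw [Pi.dim_spanSubset, finrank_fin_fun] at hdim
  lia

end RDIP

theorem stmt11_general (n : ℕ) [Fintype Fq] [PerfectField Fqm] (hq : Fintype.card Fq = q)
    (C1 C2 : Submodule Fqm (Fin n → Fqm))
    (hMRD : minRankDist Fq C1 = n - finrank Fqm C1 + 1) (μ : ℕ) (hμ : μ ≤ n - finrank Fqm C2) :
    (RDIP q C1 C2 μ : ℤ) = max 0 ((μ : ℤ) - (n : ℤ) + (finrank Fqm C1 : ℤ)) := by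
  subst hq
  have hupper := RDIP_le_sub (C₂ := C2) (show n - finrank Fqm C1 < minRankDist Fq C1 by lia) μ
  have hlower := add_finrank_le_RDIP_add (Fq := Fq) (C₁ := C1) hμ
  have hC1 : finrank Fqm C1 ≤ n := by simpa using finrank_le C1
  lia

/-- Let `m ≥ n`, `C1 ⊆ F_{q^m}^n` an MRD code and `C2 ⊊ C1` a subcode.
Then for every `0 ≤ μ ≤ n - dim C2`, `K_{R,μ}(C1,C2) = max(0, μ - n + dim C1)`. -/
theorem stmt11 (m n : ℕ) [Fintype Fq] [Fintype Fqm]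
    (hq : Fintype.card Fq = q) (hm : Module.finrank Fq Fqm = m) (hmn : n ≤ m)
    (C1 C2 : Submodule Fqm (Fin n → Fqm)) (hC : C1 ≠ ⊥)
    (hMRD : minRankDist Fq C1 = n - Module.finrank Fqm ↥C1 + 1)
    (h12 : C2 < C1) :
    ∀ μ, μ ≤ n - Module.finrank Fqm ↥C2 →
      (RDIP q C1 C2 μ : ℤ) = max 0 ((μ : ℤ) - (n : ℤ) + (Module.finrank Fqm ↥C1 : ℤ)) := by
  exact stmt11_general q Fq n hq C1 C2 hMRD

end
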